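/- arXiv:2407.17043 — 2 statements merged into one kernel-verified Lean document; each statement's English description precedes it below -/
import Mathlib

section
/- Let N ∈ ℕ, ω ∈ ℝ, and let a₀,…,a_N and b₀,…,b_N be complex numbers. Then for every t ∈ ℝ, Re{ ∑_{m=0}^{2N} ∑_{j=max(m−N,0)}^{min(m,N)} conj(a_j) b_{m−j} e^{ι (m−2j) ω t} } = Re{ ∑_{j=0}^{N} conj(a_j) b_j + ∑_{m=1}^{N} e^{ι m ω t} ∑_{l=0}^{N−m} ( conj(a_l) b_{l+m} + a_{l+m} conj(b_l) ) }. -/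
open Finset Complex


lemma aux_sq (N : ℕ) (g : ℕ → ℕ → ℝ) :
    ∑ m ∈ range (2 * N + 1), ∑ j ∈ Finset.Icc (m - N) (min m N), g j (m - j) =
      ∑ j ∈ range (N + 1), ∑ k ∈ range (N + 1), g j k := by
  rw [Finset.sum_sigma', Finset.sum_sigma']
  refine Finset.sum_bij' (fun x _ => ⟨x.2, x.1 - x.2⟩) (fun x _ => ⟨x.1 + x.2, x.1⟩)
    ?_ ?_ ?_ ?_ ?_
  · rintro ⟨m, j⟩ h
    simp only [mem_sigma, mem_range, Finset.mem_Icc] at h ⊢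
    omega
  · rintro ⟨j, k⟩ h
    simp only [mem_sigma, mem_range, Finset.mem_Icc] at h ⊢
    omega
  · rintro ⟨m, j⟩ h
    simp only [mem_sigma, mem_range, Finset.mem_Icc] at h
    have : j + (m - j) = m := by omega
    simp [this]
  · rintro ⟨j, k⟩ h
    simp
  · rintro ⟨m, j⟩ h
    rfl

lemma aux_tri (N : ℕ) (g : ℕ → ℕ → ℝ) :
    ∑ m ∈ Finset.Icc 1 N, ∑ l ∈ range (N - m + 1), g l (l + m) =
      ∑ k ∈ range (N + 1), ∑ j ∈ range k, g j k := by
  rw [Finset.sum_sigma', Finset.sum_sigma']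
  refine Finset.sum_bij' (fun x _ => ⟨x.2 + x.1, x.2⟩) (fun x _ => ⟨x.1 - x.2, x.2⟩)
    ?_ ?_ ?_ ?_ ?_
  · rintro ⟨m, j⟩ h
    simp only [mem_sigma, mem_range, Finset.mem_Icc] at h ⊢
    omega
  · rintro ⟨j, k⟩ h
    simp only [mem_sigma, mem_range, Finset.mem_Icc] at h ⊢
    omega
  · rintro ⟨m, j⟩ h
    simp
  · rintro ⟨k, j⟩ h
    simp only [mem_sigma, mem_range] at h
    have : j + (k - j) = k := by omega
    simp [this]
  · rintro ⟨m, j⟩ h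
    rfl

lemma aux_split (N : ℕ) (f : ℕ → ℕ → ℝ) :
    ∑ j ∈ range N, ∑ k ∈ range N, f j k =
      ∑ j ∈ range N, f j j + ∑ k ∈ range N, ∑ j ∈ range k, (f j k + f k j) := by
  induction N with
  | zero => simp
  | succ n ih =>
    simp only [Finset.sum_range_succ _ n, Finset.sum_add_distrib] at ih ⊢
    linarith

/-- Index-rearrangement identity for the mixed conjugate terms in the
multiharmonic expansion:
`Re ∑_{m=0}^{2N} ∑_{j=max(m−N,0)}^{min(m,N)} conj(a_j) b_{m−j} e^{ι(m−2j)ωt}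
 = Re ( ∑_{j=0}^N conj(a_j) b_j
   + ∑_{m=1}^N e^{ι m ω t} ∑_{l=0}^{N−m} (conj(a_l) b_{l+m} + a_{l+m} conj(b_l)) )`. -/
theorem stmt_8
    (N : ℕ) (ω : ℝ) (a b : ℕ → ℂ) :
    ∀ t : ℝ,
      (∑ m ∈ range (2 * N + 1), ∑ j ∈ Finset.Icc (m - N) (min m N),
        (starRingEnd ℂ) (a j) * b (m - j) *
          Complex.exp (Complex.I * (((m : ℝ) - 2 * (j : ℝ)) : ℂ) * ω * t)).re =
      ((∑ j ∈ range (N + 1), (starRingEnd ℂ) (a j) * b j) +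
        ∑ m ∈ Finset.Icc 1 N, Complex.exp (Complex.I * m * ω * t) *
          ∑ l ∈ range (N - m + 1),
            ((starRingEnd ℂ) (a l) * b (l + m) + a (l + m) * (starRingEnd ℂ) (b l))).re := by
  intro t
  set f : ℕ → ℕ → ℝ := fun j k => ((starRingEnd ℂ) (a j) * b k *
    Complex.exp (Complex.I * ((k : ℂ) - (j : ℂ)) * ω * t)).re with hf
  have hL : (∑ m ∈ range (2 * N + 1), ∑ j ∈ Finset.Icc (m - N) (min m N),
        (starRingEnd ℂ) (a j) * b (m - j) *
          Complex.exp (Complex.I * (((m : ℝ) - 2 * (j : ℝ)) : ℂ) * ω * t)).re =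
      ∑ m ∈ range (2 * N + 1), ∑ j ∈ Finset.Icc (m - N) (min m N), f j (m - j) := by
    rw [Complex.re_sum]
    refine Finset.sum_congr rfl fun m _ => ?_
    rw [Complex.re_sum]
    refine Finset.sum_congr rfl fun j hj => ?_
    have hjm : j ≤ m := by
      rw [Finset.mem_Icc] at hj
      omega
    simp only [hf]
    rw [Nat.cast_sub hjm]
    congr 4
    push_cast
    ring
  rw [hL, aux_sq, aux_split, ← aux_tri N (fun j k => f j k + f k j), Complex.add_re,
    Complex.re_sum, Complex.re_sum]
  congr 1
  · refine Finset.sum_congr rfl fun j _ => ?_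
    simp [hf]
  · refine Finset.sum_congr rfl fun m _ => ?_
    rw [Finset.mul_sum, Complex.re_sum]
    refine Finset.sum_congr rfl fun l _ => ?_
    rw [mul_add, Complex.add_re]
    simp only [hf]
    congr 1
    · rw [mul_comm]
      congr 3
      push_cast
      ring
    · rw [← Complex.conj_re]
      congr 1
      simp only [map_mul, Complex.conj_conj, ← Complex.exp_conj, map_sub, Complex.conj_I,
        Complex.conj_ofReal, map_natCast]
      rw [mul_comm]
      congr 1
      congr 1
      push_cast
      ring
end

section
/- Let T > 0, ω = 2π/T, N ∈ ℕ, and let a₀,…,a_N and b₀,…,b_N be complex numbers. Define u(t) = Re(∑_{j=0}^{N} a_j e^{ι j ω t}) and v(t) = Re(∑_{j=0}^{N} b_j e^{ι j ω t}). Then for every integer m with 1 ≤ m ≤ N, (1/T) ∫₀^T u(t) v(t) e^{−ι m ω t} dt = (1/4) [ ∑_{j=0}^{m} a_j b_{m−j} + ∑_{l=0}^{N−m} ( conj(a_l) b_{l+m} + a_{l+m} conj(b_l) ) ]. -/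
open Finset Complex

lemma aux_int (T : ℝ) (hT : 0 < T) (ω : ℝ) (hω : ω = 2 * Real.pi / T) (n : ℤ) :
    ∫ t in (0 : ℝ)..T, Complex.exp (Complex.I * n * ω * t) = if n = 0 then (T : ℂ) else 0 := by
  split_ifs with h
  · subst h; simp
  · have hTc : (T : ℂ) ≠ 0 := by exact_mod_cast hT.ne'
    have hw : (ω : ℂ) ≠ 0 := by
      have : ω ≠ 0 := by rw [hω]; positivity
      exact_mod_cast this
    have hn : (n : ℂ) ≠ 0 := by exact_mod_cast h
    have hc : Complex.I * n * ω ≠ 0 := mul_ne_zero (mul_ne_zero Complex.I_ne_zero hn) hw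
    rw [integral_exp_mul_complex hc]
    have : Complex.I * n * ω * T = n * (2 * Real.pi * Complex.I) := by
      rw [hω]; push_cast; field_simp
    rw [this, Complex.exp_int_mul_two_pi_mul_I]
    simp

lemma aux_sum1 (N m : ℕ) (hm : m ≤ N) (F : ℕ → ℕ → ℂ) :
    ∑ j ∈ range (N + 1), ∑ k ∈ range (N + 1), (if (j : ℤ) + k - m = 0 then F j k else 0) =
      ∑ j ∈ range (m + 1), F j (m - j) := by
  symm
  have hs : range (m + 1) ⊆ range (N + 1) := by
    intro x; simp only [mem_range]; omega
  rw [← sum_subset_zero_on_sdiff hs (f := fun j => F j (m - j))]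
  · intro j hj
    simp only [mem_sdiff, mem_range] at hj
    apply sum_eq_zero
    intro k hk
    rw [if_neg]; omega
  · intro j hj
    simp only [mem_range] at hj
    rw [sum_eq_single (m - j)]
    · rw [if_pos]; omega
    · intro k _ hk
      rw [if_neg]; omega
    · intro h; simp only [mem_range] at h; omega

lemma aux_sum2 (N m : ℕ) (hm : m ≤ N) (F : ℕ → ℕ → ℂ) :
    ∑ j ∈ range (N + 1), ∑ k ∈ range (N + 1), (if (k : ℤ) - j - m = 0 then F j k else 0) =
      ∑ l ∈ range (N - m + 1), F l (l + m) := by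
  symm
  have hs : range (N - m + 1) ⊆ range (N + 1) := by
    intro x; simp only [mem_range]; omega
  rw [← sum_subset_zero_on_sdiff hs (f := fun j => F j (j + m))]
  · intro j hj
    simp only [mem_sdiff, mem_range] at hj
    apply sum_eq_zero
    intro k hk
    simp only [mem_range] at hk
    rw [if_neg]; omega
  · intro j hj
    simp only [mem_range] at hj
    rw [sum_eq_single (j + m)]
    · rw [if_pos]; omega
    · intro k _ hk
      rw [if_neg]; omega
    · intro h; simp only [mem_range] at h; omega

lemma aux_re (ω : ℝ) (N : ℕ) (a : ℕ → ℂ) (t : ℝ) :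
    (((∑ j ∈ range (N + 1), a j * Complex.exp (Complex.I * j * ω * t)).re : ℝ) : ℂ) =
      (1 / 2) * ∑ j ∈ range (N + 1), (a j * Complex.exp (Complex.I * j * ω * t) +
        (starRingEnd ℂ) (a j) * Complex.exp (-(Complex.I * j * ω * t))) := by
  rw [Complex.re_eq_add_conj, map_sum, ← sum_add_distrib, div_eq_mul_inv, mul_comm, one_div]
  congr 1
  apply sum_congr rfl
  intro j _
  rw [map_mul, ← Complex.exp_conj]
  simp

/-- `m`-th complex Fourier coefficient of the product of two truncated
harmonic expansions, for `1 ≤ m ≤ N`: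
`(1/T) ∫₀^T u v e^{−ι m ω t} dt
 = (1/4) (∑_{j=0}^m a_j b_{m−j} + ∑_{l=0}^{N−m} (conj(a_l) b_{l+m} + a_{l+m} conj(b_l)))`. -/
theorem stmt_10
    (T : ℝ) (hT : 0 < T) (ω : ℝ) (hω : ω = 2 * Real.pi / T)
    (N : ℕ) (a b : ℕ → ℂ)
    (u v : ℝ → ℝ)
    (hu : ∀ t : ℝ, u t =
      (∑ j ∈ range (N + 1), a j * Complex.exp (Complex.I * j * ω * t)).re)
    (hv : ∀ t : ℝ, v t =
      (∑ j ∈ range (N + 1), b j * Complex.exp (Complex.I * j * ω * t)).re) :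
    ∀ m : ℕ, 1 ≤ m → m ≤ N →
      (1 / (T : ℂ)) * ∫ t in (0 : ℝ)..T,
          ((u t * v t : ℝ) : ℂ) * Complex.exp (-Complex.I * m * ω * t) =
        (1 / 4) * ((∑ j ∈ range (m + 1), a j * b (m - j)) +
          ∑ l ∈ range (N - m + 1),
            ((starRingEnd ℂ) (a l) * b (l + m) + a (l + m) * (starRingEnd ℂ) (b l))) := by
  intro m hm1 hmN
  have hTc : (T : ℂ) ≠ 0 := by exact_mod_cast hT.ne'
  have key : ∀ t : ℝ, ((u t * v t : ℝ) : ℂ) * Complex.exp (-Complex.I * m * ω * t) =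
      ∑ j ∈ range (N + 1), ∑ k ∈ range (N + 1), (1 / 4) *
        (a j * b k * Complex.exp (Complex.I * ((j + k - m : ℤ) : ℂ) * ω * t)
        + (starRingEnd ℂ) (a j) * b k * Complex.exp (Complex.I * ((k - j - m : ℤ) : ℂ) * ω * t)
        + a j * (starRingEnd ℂ) (b k) * Complex.exp (Complex.I * ((j - k - m : ℤ) : ℂ) * ω * t)
        + (starRingEnd ℂ) (a j) * (starRingEnd ℂ) (b k) *
          Complex.exp (Complex.I * ((-j - k - m : ℤ) : ℂ) * ω * t)) := by
    intro t
    rw [hu, hv, Complex.ofReal_mul, aux_re, aux_re, mul_mul_mul_comm, sum_mul_sum, mul_sum,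
      sum_mul]
    apply sum_congr rfl
    intro j _
    rw [mul_sum, sum_mul]
    apply sum_congr rfl
    intro k _
    have e1 : Complex.exp (Complex.I * ((j + k - m : ℤ) : ℂ) * ω * t) =
        Complex.exp (Complex.I * j * ω * t) * Complex.exp (Complex.I * k * ω * t) *
          Complex.exp (-Complex.I * m * ω * t) := by
      rw [← Complex.exp_add, ← Complex.exp_add]; congr 1; push_cast; ring
    have e2 : Complex.exp (Complex.I * ((k - j - m : ℤ) : ℂ) * ω * t) =
        Complex.exp (-(Complex.I * j * ω * t)) * Complex.exp (Complex.I * k * ω * t) *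
          Complex.exp (-Complex.I * m * ω * t) := by
      rw [← Complex.exp_add, ← Complex.exp_add]; congr 1; push_cast; ring
    have e3 : Complex.exp (Complex.I * ((j - k - m : ℤ) : ℂ) * ω * t) =
        Complex.exp (Complex.I * j * ω * t) * Complex.exp (-(Complex.I * k * ω * t)) *
          Complex.exp (-Complex.I * m * ω * t) := by
      rw [← Complex.exp_add, ← Complex.exp_add]; congr 1; push_cast; ring
    have e4 : Complex.exp (Complex.I * ((-j - k - m : ℤ) : ℂ) * ω * t) =
        Complex.exp (-(Complex.I * j * ω * t)) * Complex.exp (-(Complex.I * k * ω * t)) *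
          Complex.exp (-Complex.I * m * ω * t) := by
      rw [← Complex.exp_add, ← Complex.exp_add]; congr 1; push_cast; ring
    rw [e1, e2, e3, e4]
    ring
  have hi : ∀ (c : ℂ) (n : ℤ), IntervalIntegrable
      (fun t : ℝ => c * Complex.exp (Complex.I * n * ω * t)) MeasureTheory.volume 0 T := by
    intro c n
    apply Continuous.intervalIntegrable
    fun_prop
  simp_rw [key]
  rw [intervalIntegral.integral_finsetSum]
  swap
  · intro j _
    apply Continuous.intervalIntegrable
    fun_prop
  have inner : ∀ j ∈ range (N + 1), (∫ t in (0 : ℝ)..T, ∑ k ∈ range (N + 1), (1 / 4) *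
        (a j * b k * Complex.exp (Complex.I * ((j + k - m : ℤ) : ℂ) * ω * t)
        + (starRingEnd ℂ) (a j) * b k * Complex.exp (Complex.I * ((k - j - m : ℤ) : ℂ) * ω * t)
        + a j * (starRingEnd ℂ) (b k) * Complex.exp (Complex.I * ((j - k - m : ℤ) : ℂ) * ω * t)
        + (starRingEnd ℂ) (a j) * (starRingEnd ℂ) (b k) *
          Complex.exp (Complex.I * ((-j - k - m : ℤ) : ℂ) * ω * t))) =
      ∑ k ∈ range (N + 1), (T / 4 : ℂ) * ((if (j : ℤ) + k - m = 0 then a j * b k else 0)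
        + (if (k : ℤ) - j - m = 0 then (starRingEnd ℂ) (a j) * b k else 0)
        + (if (j : ℤ) - k - m = 0 then a j * (starRingEnd ℂ) (b k) else 0)) := by
    intro j _
    rw [intervalIntegral.integral_finsetSum]
    swap
    · intro k _
      apply Continuous.intervalIntegrable
      fun_prop
    apply sum_congr rfl
    intro k _
    rw [intervalIntegral.integral_const_mul,
      intervalIntegral.integral_add (((hi _ _).add (hi _ _)).add (hi _ _)) (hi _ _),
      intervalIntegral.integral_add ((hi _ _).add (hi _ _)) (hi _ _),
      intervalIntegral.integral_add (hi _ _) (hi _ _)]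
    simp only [intervalIntegral.integral_const_mul, aux_int T hT ω hω]
    rw [if_neg (show ¬ (-(j : ℤ) - k - m = 0) by omega)]
    simp only [mul_ite, mul_zero]
    split_ifs <;> ring
  rw [sum_congr rfl inner]
  simp_rw [← mul_sum, sum_add_distrib]
  rw [aux_sum1 N m hmN (fun j k => a j * b k),
    aux_sum2 N m hmN (fun j k => (starRingEnd ℂ) (a j) * b k),
    sum_comm (f := fun j k : ℕ => if (j : ℤ) - k - m = 0 then a j * (starRingEnd ℂ) (b k) else 0),
    aux_sum2 N m hmN (fun j k => a k * (starRingEnd ℂ) (b j))]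
  field_simp
  ring
end
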